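/- arXiv:2009.12203 — 3 statements merged into one kernel-verified Lean document; each statement's English description precedes it below -/
import Mathlib

section
/- Let B ∈ ℍ^{r×n}, X ∈ ℍ^{m×n}, A' ∈ ℍ^{m×r} be quaternion matrices and λ > 0 a real number. Define g(A) = ½‖A·B − X‖_F² + (λ/2)‖A − A'‖_F² for A ∈ ℍ^{m×r}. Then the matrix A₀ = (X·Bᴴ + λ·A')·(B·Bᴴ + λ·I)⁻¹ is a global minimizer of g: for every A ∈ ℍ^{m×r}, g(A₀) ≤ g(A). -/
open scoped Quaternion Matrix

/-- The Frobenius norm of a quaternion matrix. -/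
noncomputable def frob {m n : ℕ} (A : Matrix (Fin m) (Fin n) ℍ[ℝ]) : ℝ :=
  Real.sqrt (∑ i, ∑ j, ‖A i j‖ ^ 2)

noncomputable def ipq {m n : ℕ} (A C : Matrix (Fin m) (Fin n) ℍ[ℝ]) : ℝ :=
  (Matrix.trace (A * Cᴴ)).re

theorem re_sumq {ι : Type*} (s : Finset ι) (f : ι → ℍ[ℝ]) :
    (∑ i ∈ s, f i).re = ∑ i ∈ s, (f i).re := by
  classical
  induction s using Finset.induction_on with
  | empty => simp
  | insert a s ha ih => simp [Finset.sum_insert ha, ih]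

theorem ipq_eq {m n : ℕ} (A C : Matrix (Fin m) (Fin n) ℍ[ℝ]) :
    ipq A C = ∑ i, ∑ j, (A i j * star (C i j)).re := by
  simp only [ipq, Matrix.trace, Matrix.diag, Matrix.mul_apply, Matrix.conjTranspose_apply, re_sumq]

theorem ipq_add_left {m n : ℕ} (A D C : Matrix (Fin m) (Fin n) ℍ[ℝ]) :
    ipq (A + D) C = ipq A C + ipq D C := by
  simp [ipq, Matrix.add_mul]

theorem ipq_add_right {m n : ℕ} (A D C : Matrix (Fin m) (Fin n) ℍ[ℝ]) :
    ipq C (A + D) = ipq C A + ipq C D := by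
  simp [ipq, Matrix.mul_add]

theorem ct_smulq {m n : ℕ} (c : ℝ) (C : Matrix (Fin m) (Fin n) ℍ[ℝ]) :
    (c • C)ᴴ = c • Cᴴ := by
  ext1 i j
  rw [Matrix.conjTranspose_apply, Matrix.smul_apply, Matrix.smul_apply, Matrix.conjTranspose_apply,
    Quaternion.star_smul]

theorem ipq_smul_right {m n : ℕ} (c : ℝ) (A C : Matrix (Fin m) (Fin n) ℍ[ℝ]) :
    ipq A (c • C) = c * ipq A C := by
  simp [ipq, ct_smulq]

theorem ipq_comm {m n : ℕ} (A C : Matrix (Fin m) (Fin n) ℍ[ℝ]) :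
    ipq A C = ipq C A := by
  have h : C * Aᴴ = (A * Cᴴ)ᴴ := by simp [Matrix.conjTranspose_mul]
  rw [ipq, ipq, h, Matrix.trace_conjTranspose, Quaternion.re_star]

theorem ipq_mul {m r n : ℕ} (A : Matrix (Fin m) (Fin r) ℍ[ℝ]) (B : Matrix (Fin r) (Fin n) ℍ[ℝ])
    (C : Matrix (Fin m) (Fin n) ℍ[ℝ]) : ipq (A * B) C = ipq A (C * Bᴴ) := by
  simp [ipq, Matrix.conjTranspose_mul, Matrix.mul_assoc]

theorem ipq_self {m n : ℕ} (A : Matrix (Fin m) (Fin n) ℍ[ℝ]) :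
    ipq A A = ∑ i, ∑ j, ‖A i j‖ ^ 2 := by
  rw [ipq_eq]
  refine Finset.sum_congr rfl fun i _ => Finset.sum_congr rfl fun j _ => ?_
  rw [Quaternion.self_mul_star, Quaternion.re_coe, Quaternion.normSq_eq_norm_mul_self, sq]

theorem ipq_self_nonneg {m n : ℕ} (A : Matrix (Fin m) (Fin n) ℍ[ℝ]) : 0 ≤ ipq A A := by
  rw [ipq_self]; positivity

theorem frob_sq {m n : ℕ} (A : Matrix (Fin m) (Fin n) ℍ[ℝ]) : frob A ^ 2 = ipq A A := by
  rw [ipq_self, frob, Real.sq_sqrt (by positivity)]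

theorem ipq_self_eq_zero {m n : ℕ} (A : Matrix (Fin m) (Fin n) ℍ[ℝ]) (h : ipq A A = 0) :
    A = 0 := by
  rw [ipq_self, Finset.sum_eq_zero_iff_of_nonneg (fun _ _ => by positivity)] at h
  ext1 i j
  have h1 := h i (Finset.mem_univ i)
  rw [Finset.sum_eq_zero_iff_of_nonneg (fun _ _ => by positivity)] at h1
  simpa using h1 j (Finset.mem_univ j)

theorem isUnit_gram {r n : ℕ} (B : Matrix (Fin r) (Fin n) ℍ[ℝ]) (lam : ℝ) (hlam : 0 < lam) :
    IsUnit (B * Bᴴ + lam • (1 : Matrix (Fin r) (Fin r) ℍ[ℝ])) := by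
  set M := B * Bᴴ + lam • (1 : Matrix (Fin r) (Fin r) ℍ[ℝ]) with hM
  have hMH : Mᴴ = M := by
    simp [hM, Matrix.conjTranspose_mul, ct_smulq]
  have hinj : Function.Injective (LinearMap.mulRight ℝ M) := by
    rw [← LinearMap.ker_eq_bot, LinearMap.ker_eq_bot']
    intro V hV
    rw [LinearMap.mulRight_apply] at hV
    have h1 : ipq V (V * M) = ipq (V * B) (V * B) + lam * ipq V V := by
      rw [ipq_mul, hM, Matrix.mul_add, ipq_add_right, Matrix.mul_smul, ipq_smul_right,
        Matrix.mul_one, Matrix.mul_assoc]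
    have h0 : ipq V (V * M) = 0 := by rw [hV]; simp [ipq]
    have := ipq_self_nonneg (V * B)
    have := ipq_self_nonneg V
    apply ipq_self_eq_zero
    nlinarith
  obtain ⟨N, hN⟩ := (LinearMap.injective_iff_surjective.mp hinj) 1
  rw [LinearMap.mulRight_apply] at hN
  have hN2 : M * Nᴴ = 1 := by
    have := congrArg Matrix.conjTranspose hN
    rwa [Matrix.conjTranspose_mul, hMH, Matrix.conjTranspose_one] at this
  exact isUnit_iff_exists_and_exists.mpr ⟨⟨_, hN2⟩, ⟨_, hN⟩⟩

/-- The matrix A₀ = (X·Bᴴ + λ·A')·(B·Bᴴ + λ·I)⁻¹ is a global minimizer of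
g(A) = ½‖A·B − X‖_F² + (λ/2)‖A − A'‖_F². -/
theorem global_min_A {m r n : ℕ}
    (B : Matrix (Fin r) (Fin n) ℍ[ℝ]) (X : Matrix (Fin m) (Fin n) ℍ[ℝ])
    (A' : Matrix (Fin m) (Fin r) ℍ[ℝ]) (lam : ℝ) (hlam : 0 < lam) :
    ∀ A : Matrix (Fin m) (Fin r) ℍ[ℝ],
      (1 / 2) * frob ((X * Bᴴ + lam • A') *
            Ring.inverse (B * Bᴴ + lam • (1 : Matrix (Fin r) (Fin r) ℍ[ℝ])) * B - X) ^ 2 +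
        (lam / 2) * frob ((X * Bᴴ + lam • A') *
            Ring.inverse (B * Bᴴ + lam • (1 : Matrix (Fin r) (Fin r) ℍ[ℝ])) - A') ^ 2 ≤
      (1 / 2) * frob (A * B - X) ^ 2 + (lam / 2) * frob (A - A') ^ 2 := by
  intro A
  have hu := isUnit_gram B lam hlam
  have hA : (X * Bᴴ + lam • A') *
      Ring.inverse (B * Bᴴ + lam • (1 : Matrix (Fin r) (Fin r) ℍ[ℝ])) *
      (B * Bᴴ + lam • (1 : Matrix (Fin r) (Fin r) ℍ[ℝ])) = X * Bᴴ + lam • A' := by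
    rw [Matrix.mul_assoc, Ring.inverse_mul_cancel _ hu, Matrix.mul_one]
  generalize (X * Bᴴ + lam • A') *
      Ring.inverse (B * Bᴴ + lam • (1 : Matrix (Fin r) (Fin r) ℍ[ℝ])) = A₀ at hA ⊢
  obtain ⟨D, rfl⟩ : ∃ D, A = D + A₀ := ⟨A - A₀, by simp⟩
  have e1 : (D + A₀) * B - X = D * B + (A₀ * B - X) := by rw [Matrix.add_mul]; abel
  have e2 : D + A₀ - A' = D + (A₀ - A') := by abel
  have hz : (A₀ * B - X) * Bᴴ + lam • (A₀ - A') = 0 := by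
    rw [Matrix.mul_add, Matrix.mul_smul, Matrix.mul_one, ← Matrix.mul_assoc] at hA
    rw [Matrix.sub_mul, smul_sub, sub_add_sub_comm, hA, sub_self]
  have hip : ipq (D * B) (A₀ * B - X) + lam * ipq D (A₀ - A') = 0 := by
    rw [ipq_mul, ← ipq_smul_right, ← ipq_add_right, hz]; simp [ipq]
  have p1 := ipq_self_nonneg (D * B)
  have p2 := mul_nonneg hlam.le (ipq_self_nonneg D)
  simp only [frob_sq]
  rw [e1, e2]
  simp only [ipq_add_left, ipq_add_right]
  rw [ipq_comm (A₀ * B - X) (D * B), ipq_comm (A₀ - A') D]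
  linarith
end

section
/- Let D ∈ ℍ^{m×n}, Ω ⊆ Fin m × Fin n, and let A# ∈ ℍ^{m×r}, B# ∈ ℍ^{r×n}, X# ∈ ℍ^{m×n} with X#_{ij} = D_{ij} for all (i,j) ∈ Ω. Suppose (A#, B#, X#) is a global minimizer of f(A,B,X) = ½‖A·B − X‖_F² over all triples (A, B, X) with A ∈ ℍ^{m×r}, B ∈ ℍ^{r×n}, X ∈ ℍ^{m×n} satisfying X_{ij} = D_{ij} for all (i,j) ∈ Ω. Then (A#·B# − X#)·(B#)ᴴ = 0, (A#)ᴴ·(A#·B# − X#) = 0, and X#_{ij} = (A#·B#)_{ij} for all (i,j) ∉ Ω. -/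
open scoped Quaternion Matrix

theorem frob_sq_aux {m n : ℕ} (A : Matrix (Fin m) (Fin n) ℍ[ℝ]) :
    frob A ^ 2 = (A * Aᴴ).trace.re := by
  unfold frob
  rw [Real.sq_sqrt (by positivity)]
  simp only [Matrix.trace, Matrix.diag, Matrix.mul_apply, Matrix.conjTranspose_apply]
  have h : ∀ (k : ℕ) (f : Fin k → ℍ[ℝ]), (∑ i, f i).re = ∑ i, (f i).re := fun k f =>
    map_sum (⟨⟨fun q : ℍ[ℝ] => q.re, rfl⟩, fun _ _ => rfl⟩ : ℍ[ℝ] →+ ℝ) f _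
  simp only [h]
  refine Finset.sum_congr rfl fun i _ => Finset.sum_congr rfl fun j _ => ?_
  rw [sq, ← Quaternion.normSq_eq_norm_mul_self, Quaternion.self_mul_star, Quaternion.re_coe]

theorem re_trace_comm_aux {m n : ℕ} (A : Matrix (Fin m) (Fin n) ℍ[ℝ])
    (B : Matrix (Fin n) (Fin m) ℍ[ℝ]) : (A * B).trace.re = (B * A).trace.re := by
  simp only [Matrix.trace, Matrix.diag, Matrix.mul_apply]
  have h : ∀ (k : ℕ) (f : Fin k → ℍ[ℝ]), (∑ i, f i).re = ∑ i, (f i).re := fun k f =>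
    map_sum (⟨⟨fun q : ℍ[ℝ] => q.re, rfl⟩, fun _ _ => rfl⟩ : ℍ[ℝ] →+ ℝ) f _
  simp only [h]
  rw [Finset.sum_comm]
  refine Finset.sum_congr rfl fun i _ => Finset.sum_congr rfl fun j _ => ?_
  simp only [Quaternion.re_mul]
  ring

theorem re_trace_star_aux {m : ℕ} (A : Matrix (Fin m) (Fin m) ℍ[ℝ]) :
    (Aᴴ).trace.re = A.trace.re := by
  rw [Matrix.trace_conjTranspose, Quaternion.re_star]

theorem frob_zero_aux {m n : ℕ} (A : Matrix (Fin m) (Fin n) ℍ[ℝ]) (h : frob A ^ 2 = 0) :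
    A = 0 := by
  unfold frob at h
  rw [Real.sq_sqrt (by positivity),
    Finset.sum_eq_zero_iff_of_nonneg (fun _ _ => by positivity)] at h
  ext1 i j
  have h1 := h i (Finset.mem_univ _)
  rw [Finset.sum_eq_zero_iff_of_nonneg (fun _ _ => by positivity)] at h1
  simpa using h1 j (Finset.mem_univ _)

theorem frob_expand_aux {m n : ℕ} (E F : Matrix (Fin m) (Fin n) ℍ[ℝ]) (t : ℝ) :
    frob (E + t • F) ^ 2 = frob E ^ 2 + 2 * t * (E * Fᴴ).trace.re + t ^ 2 * frob F ^ 2 := by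
  have h1 : (F * Eᴴ).trace.re = (E * Fᴴ).trace.re := by
    rw [← re_trace_star_aux, Matrix.conjTranspose_mul, Matrix.conjTranspose_conjTranspose]
  have h2 : (t • F)ᴴ = t • Fᴴ := by
    ext1 i j
    simp only [Matrix.conjTranspose_apply, Matrix.smul_apply]
    ext <;> simp
  simp only [frob_sq_aux, Matrix.conjTranspose_add, h2, Matrix.add_mul,
    Matrix.mul_add, Matrix.trace_add, Matrix.smul_mul, Matrix.mul_smul, Matrix.trace_smul,
    Quaternion.re_add, Quaternion.re_smul, h1, smul_eq_mul]
  ring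

theorem station_aux {m n k l : ℕ} (E F : Matrix (Fin m) (Fin n) ℍ[ℝ])
    (G : Matrix (Fin k) (Fin l) ℍ[ℝ])
    (h : ∀ t : ℝ, (1 / 2) * frob E ^ 2 ≤ (1 / 2) * frob (E + t • F) ^ 2)
    (hG : (E * Fᴴ).trace.re = frob G ^ 2) : G = 0 := by
  apply frob_zero_aux
  rw [← hG]
  set b := (E * Fᴴ).trace.re
  have hc : 0 ≤ frob F ^ 2 := sq_nonneg _
  set c := frob F ^ 2
  have h2 : ∀ t : ℝ, 0 ≤ 2 * t * b + t ^ 2 * c := fun t => by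
    have := h t
    rw [frob_expand_aux] at this
    linarith
  have h3 := h2 (-b / (c + 1))
  have h4 : 2 * (-b / (c + 1)) * b + (-b / (c + 1)) ^ 2 * c
      = - (b ^ 2 * (c + 2) / (c + 1) ^ 2) := by
    field_simp
    ring
  rw [h4] at h3
  by_contra hb
  have : 0 < b ^ 2 * (c + 2) / (c + 1) ^ 2 := by positivity
  linarith

/-- First-order optimality: a global minimizer of ½‖A·B − X‖_F² over feasible
triples (X agreeing with D on Ω) is a stationary point. -/
theorem minimizer_is_stationary {m r n : ℕ}
    (D : Matrix (Fin m) (Fin n) ℍ[ℝ]) (Ω : Set (Fin m × Fin n))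
    (A : Matrix (Fin m) (Fin r) ℍ[ℝ]) (B : Matrix (Fin r) (Fin n) ℍ[ℝ])
    (X : Matrix (Fin m) (Fin n) ℍ[ℝ])
    (hfeas : ∀ p ∈ Ω, X p.1 p.2 = D p.1 p.2)
    (hmin : ∀ (A' : Matrix (Fin m) (Fin r) ℍ[ℝ]) (B' : Matrix (Fin r) (Fin n) ℍ[ℝ])
      (X' : Matrix (Fin m) (Fin n) ℍ[ℝ]), (∀ p ∈ Ω, X' p.1 p.2 = D p.1 p.2) →
      (1 / 2) * frob (A * B - X) ^ 2 ≤ (1 / 2) * frob (A' * B' - X') ^ 2) :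
    (A * B - X) * Bᴴ = 0 ∧ Aᴴ * (A * B - X) = 0 ∧
      ∀ p : Fin m × Fin n, p ∉ Ω → X p.1 p.2 = (A * B) p.1 p.2 := by
  classical
  set E := A * B - X with hE
  refine ⟨?_, ?_, ?_⟩
  · apply station_aux E (E * Bᴴ * B) (E * Bᴴ)
    · intro t
      have := hmin (A + t • (E * Bᴴ)) B X hfeas
      rwa [Matrix.add_mul, Matrix.smul_mul, add_sub_right_comm, ← hE] at this
    · rw [frob_sq_aux, Matrix.conjTranspose_mul (E * Bᴴ) B, ← Matrix.mul_assoc]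
  · apply station_aux E (A * (Aᴴ * E)) (Aᴴ * E)
    · intro t
      have := hmin A (B + t • (Aᴴ * E)) X hfeas
      rwa [Matrix.mul_add, Matrix.mul_smul, add_sub_right_comm, ← hE] at this
    · rw [frob_sq_aux, Matrix.conjTranspose_mul A (Aᴴ * E), ← Matrix.mul_assoc,
        re_trace_comm_aux, Matrix.mul_assoc]
  · let F : Matrix (Fin m) (Fin n) ℍ[ℝ] := Matrix.of fun i j => if (i, j) ∈ Ω then 0 else E i j
    have hF : F = 0 := by
      apply station_aux E F F
      · intro t
        have := hmin A B (X - t • F) (fun p hp => by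
          simp [F, hp, hfeas p hp])
        rwa [← sub_add, ← hE] at this
      · rw [frob_sq_aux]
        suffices hs : (E * Fᴴ).trace = (F * Fᴴ).trace by rw [hs]
        simp only [Matrix.trace, Matrix.diag, Matrix.mul_apply, Matrix.conjTranspose_apply]
        refine Finset.sum_congr rfl fun i _ => Finset.sum_congr rfl fun j _ => ?_
        by_cases hp : (i, j) ∈ Ω <;> simp [F, hp]
    intro p hp
    have h := congrFun (congrFun hF p.1) p.2
    simp only [F, Matrix.of_apply, Prod.mk.eta, hp, if_false, hE, Matrix.sub_apply,
      Matrix.zero_apply] at h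
    exact (sub_eq_zero.mp h).symm
end

section
/- Fix D ∈ ℍ^{m×n}, Ω ⊆ Fin m × Fin n, and λ > 0. Let A ∈ ℍ^{m×r}, B ∈ ℍ^{r×n}, and define X ∈ ℍ^{m×n} by X_{ij} = D_{ij} for (i,j) ∈ Ω and X_{ij} = (A·B)_{ij} for (i,j) ∉ Ω. Set A⁺ = (X·Bᴴ + λ·A)·(B·Bᴴ + λ·I)⁻¹ and B⁺ = ((A⁺)ᴴ·A⁺ + λ·I)⁻¹·((A⁺)ᴴ·X + λ·B). If A⁺ = A and B⁺ = B, then (A·B − X)·Bᴴ = 0, Aᴴ·(A·B − X) = 0, and X_{ij} = (A·B)_{ij} for all (i,j) ∉ Ω (so (A, B, X) is a stationary point of the constrained problem). -/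
open scoped Quaternion Matrix

theorem aux_diag {k r : ℕ} (W : Matrix (Fin k) (Fin r) ℍ[ℝ]) (j : Fin r) :
    ((Wᴴ * W) j j).re = ∑ i, Quaternion.normSq (W i j) := by
  have hs : ∀ f : Fin k → ℍ[ℝ], (∑ i, f i).re = ∑ i, (f i).re := by
    intro f
    exact map_sum (AddMonoidHom.mk' (fun q : ℍ[ℝ] => q.re) (fun a b => Quaternion.re_add a b)) f _
  rw [Matrix.mul_apply, hs]
  refine Finset.sum_congr rfl fun i _ => ?_
  rw [Matrix.conjTranspose_apply, Quaternion.star_mul_self, Quaternion.re_coe]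

theorem aux_unit {k r : ℕ} (C : Matrix (Fin k) (Fin r) ℍ[ℝ]) (lam : ℝ) (hlam : 0 < lam) :
    IsUnit (Cᴴ * C + lam • (1 : Matrix (Fin r) (Fin r) ℍ[ℝ])) := by
  set M := Cᴴ * C + lam • (1 : Matrix (Fin r) (Fin r) ℍ[ℝ]) with hM
  have hH : Mᴴ = M := by
    rw [hM, Matrix.conjTranspose_add, Matrix.conjTranspose_mul, Matrix.conjTranspose_conjTranspose]
    congr 1
    ext1 i j
    rw [Matrix.conjTranspose_apply, Matrix.smul_apply, Matrix.smul_apply, Quaternion.star_smul,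
      ← Matrix.conjTranspose_apply, Matrix.conjTranspose_one]
  have hinj : Function.Injective (LinearMap.mulLeft ℝ M) := by
    rw [← LinearMap.ker_eq_bot, LinearMap.ker_eq_bot']
    intro V hV
    rw [LinearMap.mulLeft_apply] at hV
    have h1 : (C * V)ᴴ * (C * V) + lam • (Vᴴ * V) = 0 := by
      have : Vᴴ * (M * V) = 0 := by rw [hV, Matrix.mul_zero]
      rw [← this, hM, Matrix.add_mul, Matrix.mul_add, Matrix.conjTranspose_mul]
      simp [Matrix.mul_assoc]
    ext1 i j
    have h2 := congrArg (fun N : Matrix (Fin r) (Fin r) ℍ[ℝ] => (N j j).re) h1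
    simp only [Matrix.add_apply, Matrix.smul_apply, Quaternion.re_add, Quaternion.re_smul,
      aux_diag, Matrix.zero_apply, Quaternion.re_zero, smul_eq_mul] at h2
    have h3 : 0 ≤ ∑ i, Quaternion.normSq ((C * V) i j) :=
      Finset.sum_nonneg fun _ _ => Quaternion.normSq_nonneg
    have h4 : ∀ i ∈ Finset.univ, 0 ≤ Quaternion.normSq (V i j) :=
      fun _ _ => Quaternion.normSq_nonneg
    have h5 : ∑ i, Quaternion.normSq (V i j) = 0 := by
      have := Finset.sum_nonneg h4
      nlinarith
    rw [Finset.sum_eq_zero_iff_of_nonneg h4] at h5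
    exact Quaternion.normSq_eq_zero.1 (h5 i (Finset.mem_univ i))
  obtain ⟨N, hN⟩ := LinearMap.injective_iff_surjective.1 hinj 1
  rw [LinearMap.mulLeft_apply] at hN
  have hN' : Nᴴ * M = 1 := by
    have := congrArg Matrix.conjTranspose hN
    rwa [Matrix.conjTranspose_mul, hH, Matrix.conjTranspose_one] at this
  have : Nᴴ = N := left_inv_eq_right_inv hN' hN
  exact ⟨⟨M, N, hN, this ▸ hN'⟩, rfl⟩

/-- If one LRQD iteration leaves (A, B) unchanged, then (A, B, X) is a stationary
point of the constrained problem. -/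
theorem fixed_point_is_stationary {m r n : ℕ}
    (D : Matrix (Fin m) (Fin n) ℍ[ℝ]) (Ω : Set (Fin m × Fin n))
    (lam : ℝ) (hlam : 0 < lam)
    (A : Matrix (Fin m) (Fin r) ℍ[ℝ]) (B : Matrix (Fin r) (Fin n) ℍ[ℝ])
    (X : Matrix (Fin m) (Fin n) ℍ[ℝ])
    (hXin : ∀ p ∈ Ω, X p.1 p.2 = D p.1 p.2)
    (hXout : ∀ p : Fin m × Fin n, p ∉ Ω → X p.1 p.2 = (A * B) p.1 p.2)
    (Aplus : Matrix (Fin m) (Fin r) ℍ[ℝ]) (Bplus : Matrix (Fin r) (Fin n) ℍ[ℝ])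
    (hAplus : Aplus = (X * Bᴴ + lam • A) *
      Ring.inverse (B * Bᴴ + lam • (1 : Matrix (Fin r) (Fin r) ℍ[ℝ])))
    (hBplus : Bplus = Ring.inverse (Aplusᴴ * Aplus + lam • (1 : Matrix (Fin r) (Fin r) ℍ[ℝ])) *
      (Aplusᴴ * X + lam • B))
    (hA : Aplus = A) (hB : Bplus = B) :
    (A * B - X) * Bᴴ = 0 ∧ Aᴴ * (A * B - X) = 0 ∧
      ∀ p : Fin m × Fin n, p ∉ Ω → X p.1 p.2 = (A * B) p.1 p.2 := by
  subst hA hB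
  have hu1 := aux_unit Bplusᴴ lam hlam
  rw [Matrix.conjTranspose_conjTranspose] at hu1
  have hu2 := aux_unit Aplus lam hlam
  refine ⟨?_, ?_, hXout⟩
  · have h := congrArg
      (· * (Bplus * Bplusᴴ + lam • (1 : Matrix (Fin r) (Fin r) ℍ[ℝ]))) hAplus
    simp only [Matrix.mul_assoc] at h
    rw [Ring.inverse_mul_cancel _ hu1, Matrix.mul_one, Matrix.mul_add, Matrix.mul_smul,
      Matrix.mul_one, add_left_inj] at h
    rw [Matrix.sub_mul, Matrix.mul_assoc, h, sub_self]
  · have h := congrArg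
      ((Aplusᴴ * Aplus + lam • (1 : Matrix (Fin r) (Fin r) ℍ[ℝ])) * ·) hBplus
    simp only [← Matrix.mul_assoc] at h
    rw [Ring.mul_inverse_cancel _ hu2, Matrix.one_mul, Matrix.add_mul, Matrix.smul_mul,
      Matrix.one_mul, add_left_inj] at h
    rw [Matrix.mul_sub, ← Matrix.mul_assoc, h, sub_self]
end
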